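/- arXiv:0806.2411 — 2 statements merged into one kernel-verified Lean document; each statement's English description precedes it below -/
import Mathlib

section
/- Let p : (0,∞) → ℝ be C² with p′ < 0 and p″ > 0, let 0 < v₊ < v₋, let a = −(v₊ − v₋)/(p(v₊) − p(v₋)), and let d > 0. Then there exists a nonconstant C² function v̂ : ℝ → (0,∞) satisfying v̂ − v₋ + a(p(v̂) − p(v₋)) = v̂′/v̂ − d v̂″ on all of ℝ, with v̂(x) → v₋ as x → −∞, v̂(x) → v₊ as x → +∞, and v̂′(x) → 0 as x → ±∞. That is, a shock profile (heteroclinic connection from v₋ to v₊) exists. -/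
open Filter Topology Set
open scoped NNReal

/-!
Run backwards in time, the profile equation is the damped oscillator `d x'' + x' / x + f(x) = 0`
with force `f(x) = x - vm + a (p(x) - p(vm))`. Since `f` is strictly convex and vanishes at `vp` and
`vm`, its primitive `Φ` has a local maximum at `vp` and a well with bottom `vm`, and the profile is
an orbit running down from the hilltop `vp` to the bottom `vm`.

The force and the friction `1 / x` only matter for `x ≥ vp`; freezing them at their values at `vp`
for `x < vp`, the equation becomes a globally Lipschitz system in the Liénard plane, hence generates
a flow. The energy `V = d x'² / 2 + Φ` decreases along it, strictly so off the rest points. The set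
`C = {x ≥ vp, V ≤ Φ(vp)}` is compact, and it is forward invariant because an orbit can only meet
`x = vp` at the rest point.

Instead of the unstable manifold of the saddle `vp`, the argument uses the path of zero-velocity
points over `[vp, vm]`, which joins the two rest points inside `C`. Its image under the time-`n` map
also joins them in `C`, so it contains a point at any prescribed intermediate energy level. By
compactness some point at that level has its whole orbit in `C`. By LaSalle's principle the limit
points of this orbit are rest points; as energies decrease through an intermediate level, the limit
is `vp` in the past and `vm` in the future.
-/

section IntegralCurve

variable {E : Type*} [NormedAddCommGroup E] [NormedSpace ℝ E] {K : ℝ≥0}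

theorem eqOn_Ioo_inter_Ioo_of_isIntegralCurveOn {v : ℝ → E → E} {γ γ' : ℝ → E}
    {a b a' b' t₀ : ℝ} (hv : ∀ t, LipschitzWith K (v t)) (ht₀ : t₀ ∈ Ioo a b ∩ Ioo a' b')
    (hγ : IsIntegralCurveOn γ v (Ioo a b)) (hγ' : IsIntegralCurveOn γ' v (Ioo a' b'))
    (h : γ t₀ = γ' t₀) : EqOn γ γ' (Ioo a b ∩ Ioo a' b') := by
  rw [Ioo_inter_Ioo]
  refine ODE_solution_unique_of_mem_Ioo (s := fun _ ↦ univ) (fun t _ ↦ (hv t).lipschitzOnWith)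
    (by rwa [← Ioo_inter_Ioo]) ?_ ?_ h <;> rw [← Ioo_inter_Ioo]
  exacts [fun t ht ↦ ⟨(hγ t ht.1).hasDerivAt (isOpen_Ioo.mem_nhds ht.1), trivial⟩,
    fun t ht ↦ ⟨(hγ' t ht.2).hasDerivAt (isOpen_Ioo.mem_nhds ht.2), trivial⟩]

theorem exists_isIntegralCurveOn_iUnion_Ioo {ι : Type*} {v : ℝ → E → E} {t₀ : ℝ} {z : E}
    {a b : ι → ℝ} (hv : ∀ t, LipschitzWith K (v t)) (ht₀ : ∀ i, t₀ ∈ Ioo (a i) (b i))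
    (h : ∀ i, ∃ γ : ℝ → E, γ t₀ = z ∧ IsIntegralCurveOn γ v (Ioo (a i) (b i))) :
    ∃ γ : ℝ → E, γ t₀ = z ∧ IsIntegralCurveOn γ v (⋃ i, Ioo (a i) (b i)) := by
  choose γ hγ₀ hγ using h
  classical
  let Γ : ℝ → E := fun t ↦ if h : ∃ i, t ∈ Ioo (a i) (b i) then γ h.choose t else z
  have hΓ (i) : EqOn Γ (γ i) (Ioo (a i) (b i)) := fun t ht ↦ by
    have hex : ∃ i, t ∈ Ioo (a i) (b i) := ⟨i, ht⟩
    simp only [Γ, dif_pos hex]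
    exact eqOn_Ioo_inter_Ioo_of_isIntegralCurveOn hv ⟨ht₀ _, ht₀ i⟩ (hγ _) (hγ i)
      (by rw [hγ₀, hγ₀]) ⟨hex.choose_spec, ht⟩
  refine ⟨Γ, ?_, fun t ht ↦ ?_⟩
  · simp only [Γ, hγ₀, dite_eq_ite, ite_self]
  · obtain ⟨i, hi⟩ := mem_iUnion.mp ht
    rw [hΓ i hi]
    have hmem := isOpen_Ioo.mem_nhds hi
    exact (((hγ i t hi).hasDerivAt hmem).congr_of_eventuallyEq
      ((hΓ i).eventuallyEq_of_mem hmem)).hasDerivWithinAt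

theorem isIntegralCurve_eq_of_lipschitzWith {v : ℝ → E → E} {γ γ' : ℝ → E} {t₀ : ℝ}
    (hv : ∀ t, LipschitzWith K (v t)) (hγ : IsIntegralCurve γ v) (hγ' : IsIntegralCurve γ' v)
    (h : γ t₀ = γ' t₀) : γ = γ' :=
  ODE_solution_unique_univ (s := fun _ ↦ univ) (fun t ↦ (hv t).lipschitzOnWith)
    (fun t ↦ ⟨hγ t, trivial⟩) (fun t ↦ ⟨hγ' t, trivial⟩) h

theorem dist_le_mul_exp_of_isIntegralCurve {G : E → E} {γ γ' : ℝ → E} (hG : LipschitzWith K G)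
    (hγ : IsIntegralCurve γ fun _ ↦ G) (hγ' : IsIntegralCurve γ' fun _ ↦ G) (t : ℝ) :
    dist (γ t) (γ' t) ≤ dist (γ 0) (γ' 0) * Real.exp (K * |t|) := by
  wlog ht : 0 ≤ t generalizing G γ γ' t
  · have hneg {δ : ℝ → E} (hδ : IsIntegralCurve δ fun _ ↦ G) :
        IsIntegralCurve (fun s ↦ δ (-s)) fun _ ↦ -G := fun s ↦ by
      simpa [Function.comp_def] using (hδ (-s)).scomp s (hasDerivAt_neg s)
    simpa using this (G := -G) hG.neg (hneg hγ) (hneg hγ') (-t) (by linarith)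
  · have := dist_le_of_trajectories_ODE (v := fun _ ↦ G) (a := 0) (b := t) (fun _ ↦ hG)
      hγ.continuous.continuousOn (fun s _ ↦ (hγ s).hasDerivWithinAt)
      hγ'.continuous.continuousOn (fun s _ ↦ (hγ' s).hasDerivWithinAt) le_rfl t ⟨ht, le_rfl⟩
    simpa [abs_of_nonneg ht] using this

theorem apply_eq_self_of_isIntegralCurve {G : E → E} {φ : Flow ℝ E} {z : E}
    (hG : LipschitzWith K G) (hφ : ∀ z, IsIntegralCurve (φ · z) fun _ ↦ G)
    (hz : G z = 0) (t : ℝ) : φ t z = z := by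
  have hconst : IsIntegralCurve (fun _ ↦ z) fun _ ↦ G := fun s ↦ by
    simpa only [hz] using hasDerivAt_const s z
  exact congrFun (isIntegralCurve_eq_of_lipschitzWith (t₀ := 0) (fun _ ↦ hG) (hφ z) hconst
    (φ.map_zero_apply z)) t

variable {G : E → E}

theorem exists_isIntegralCurveOn_Ioo_two_mul {T : ℝ} (hG : LipschitzWith K G) (hT : 0 < T)
    (h : ∀ z, ∃ γ : ℝ → E, γ 0 = z ∧ IsIntegralCurveOn γ (fun _ ↦ G) (Ioo (-T) T)) (z : E) :
    ∃ γ : ℝ → E, γ 0 = z ∧ IsIntegralCurveOn γ (fun _ ↦ G) (Ioo (-(2 * T)) (2 * T)) := by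
  have hshift (c : Ioo (-T) T) :
      ∃ γ : ℝ → E, γ 0 = z ∧ IsIntegralCurveOn γ (fun _ ↦ G) (Ioo (c - T) (c + T)) := by
    obtain ⟨w, hw₀, hw⟩ := h z
    obtain ⟨γ, hγ₀, hγ⟩ := h (w c)
    have hγc : IsIntegralCurveOn (fun t ↦ γ (t - c)) (fun _ ↦ G) (Ioo (c - T) (c + T)) :=
      fun t ht ↦ by
        have hmem : t - c ∈ Ioo (-T) T := ⟨by linarith [ht.1], by linarith [ht.2]⟩
        exact (((hγ _ hmem).hasDerivAt (isOpen_Ioo.mem_nhds hmem)).comp_sub_const t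
          (c : ℝ)).hasDerivWithinAt
    have h0 : (0 : ℝ) ∈ Ioo (c - T) (c + T) := ⟨by linarith [c.2.2], by linarith [c.2.1]⟩
    refine ⟨_, ?_, hγc⟩
    rw [← hw₀]
    exact (eqOn_Ioo_inter_Ioo_of_isIntegralCurveOn (fun _ ↦ hG) ⟨c.2, by simpa using hT⟩ hw hγc
      (by simp [hγ₀]) ⟨by simpa using hT, h0⟩).symm
  obtain ⟨γ, hγ₀, hγ⟩ := exists_isIntegralCurveOn_iUnion_Ioo (fun _ ↦ hG)
    (fun c : Ioo (-T) T ↦ ⟨by linarith [c.2.2], by linarith [c.2.1]⟩) hshift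
  refine ⟨γ, hγ₀, hγ.mono fun t ht ↦ mem_iUnion.mpr ⟨⟨t / 2, ?_⟩, ?_⟩⟩ <;>
    constructor <;> linarith [ht.1, ht.2]

variable [CompleteSpace E]

theorem exists_isIntegralCurveOn_Ioo_inv_add_one (hG : LipschitzWith K G) (z : E) :
    ∃ γ : ℝ → E, γ 0 = z ∧
      IsIntegralCurveOn γ (fun _ ↦ G) (Ioo (-(K + 1 : ℝ)⁻¹) (K + 1 : ℝ)⁻¹) := by
  have hpos : (0 : ℝ) < (K + 1 : ℝ)⁻¹ := by positivity
  have hpl : IsPicardLindelof (fun _ ↦ G)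
      (⟨0, by constructor <;> linarith⟩ : Icc (-(K + 1 : ℝ)⁻¹) (K + 1 : ℝ)⁻¹) z
      ‖G z‖₊ 0 ((K + 1) * ‖G z‖₊) K := by
    refine .of_time_independent (fun x hx ↦ ?_) hG.lipschitzOnWith ?_
    · have := hG.norm_sub_le x z
      have h1 : (K : ℝ) * ‖x - z‖ ≤ K * ‖G z‖ := by
        gcongr
        simpa [dist_eq_norm] using hx
      have h2 := norm_le_norm_add_norm_sub' (G x) (G z)
      push_cast
      linarith
    · simp [field]
  obtain ⟨γ, hγ₀, hγ⟩ := hpl.exists_eq_forall_mem_Icc_hasDerivWithinAt₀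
  exact ⟨γ, hγ₀, IsIntegralCurveOn.mono hγ Ioo_subset_Icc_self⟩

theorem exists_isIntegralCurve_of_lipschitzWith (hG : LipschitzWith K G) (z : E) :
    ∃ γ : ℝ → E, γ 0 = z ∧ IsIntegralCurve γ fun _ ↦ G := by
  set ε : ℝ := (K + 1 : ℝ)⁻¹
  have hε : 0 < ε := by positivity
  have hlocal (n : ℕ) (z : E) : ∃ γ : ℝ → E, γ 0 = z ∧
      IsIntegralCurveOn γ (fun _ ↦ G) (Ioo (-(2 ^ n * ε)) (2 ^ n * ε)) := by
    induction n generalizing z with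
    | zero => simpa using exists_isIntegralCurveOn_Ioo_inv_add_one hG z
    | succ n ih =>
      simpa only [pow_succ', mul_assoc] using
        exists_isIntegralCurveOn_Ioo_two_mul hG (by positivity) ih z
  obtain ⟨γ, hγ₀, hγ⟩ := exists_isIntegralCurveOn_iUnion_Ioo (fun _ ↦ hG)
    (fun n : ℕ ↦ by simp [hε]) fun n ↦ hlocal n z
  refine ⟨γ, hγ₀, isIntegralCurveOn_univ.mp (hγ.mono fun t _ ↦ mem_iUnion.mpr ?_)⟩
  obtain ⟨n, hn⟩ := pow_unbounded_of_one_lt (|t| / ε) one_lt_two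
  exact ⟨n, abs_lt.mp ((div_lt_iff₀ hε).mp hn)⟩

theorem exists_flow_isIntegralCurve (hG : LipschitzWith K G) :
    ∃ φ : Flow ℝ E, ∀ z, IsIntegralCurve (φ · z) fun _ ↦ G := by
  choose γ hγ₀ hγ using exists_isIntegralCurve_of_lipschitzWith hG
  refine ⟨⟨fun t z ↦ γ z t, ?_, fun s t z ↦ ?_, hγ₀⟩, hγ⟩
  · refine continuous_iff_continuousAt.mpr fun ⟨t, z⟩ ↦ tendsto_iff_dist_tendsto_zero.mpr ?_
    refine squeeze_zero (g := fun p : ℝ × E ↦ dist p.2 z * Real.exp (K * |p.1|) +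
      dist (γ z p.1) (γ z t)) (fun _ ↦ dist_nonneg) (fun p ↦ ?_) ?_
    · have := dist_le_mul_exp_of_isIntegralCurve hG (hγ p.2) (hγ z) p.1
      rw [hγ₀, hγ₀] at this
      exact (dist_triangle _ (γ z p.1) _).trans (add_le_add_left this _)
    · have hc := (hγ z).continuous
      exact (Continuous.tendsto' (by fun_prop) _ _ (by simp))
  · refine congrFun (isIntegralCurve_eq_of_lipschitzWith (t₀ := 0) (fun _ ↦ hG)
      ((hγ z).comp_add t) (hγ (γ z t)) ?_) s
    simp [hγ₀]

end IntegralCurve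

section Lyapunov

variable {X : Type*} [TopologicalSpace X] {φ : Flow ℝ X} {V : X → ℝ}

theorem lyapunov_eq_of_mapClusterPt {l : Filter ℝ} {z q : X} {e : ℝ} (hV : Continuous V)
    (hl : ∀ s, Tendsto (s + ·) l l) (hlim : Tendsto (fun t ↦ V (φ t z)) l (𝓝 e))
    (hq : MapClusterPt q l (φ · z)) (t : ℝ) : V (φ t q) = e := by
  have hcl : MapClusterPt (V (φ t q)) l ((fun x ↦ V (φ t x)) ∘ (φ · z)) :=
    hq.continuousAt_comp (f := fun x ↦ V (φ t x)) (hV.comp (φ.continuous_toFun t)).continuousAt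
  have hshift : Tendsto ((fun x ↦ V (φ t x)) ∘ (φ · z)) l (𝓝 e) :=
    (hlim.comp (hl t)).congr fun s ↦ by simp [φ.map_add]
  exact eq_of_nhds_neBot (ClusterPt.mono hcl hshift)

variable [T2Space X] {C : Set X}

theorem exists_forall_mem_of_isForwardInvariant {S : Set X} {P Q : X} {m : ℝ} (hC : IsCompact C)
    (hinv : IsForwardInvariant φ C) (hV : Continuous V) (hS : IsPreconnected S) (hSC : S ⊆ C)
    (hPS : P ∈ S) (hQS : Q ∈ S) (hP : ∀ t, φ t P = P) (hQ : ∀ t, φ t Q = Q)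
    (hm : m ∈ Icc (V Q) (V P)) : ∃ z, V z = m ∧ ∀ t, φ t z ∈ C := by
  let D : ℕ → Set X := fun n ↦ {z | φ (-n) z ∈ C ∧ V z = m}
  have hanti (n : ℕ) : D (n + 1) ⊆ D n := fun z ⟨hz, hzm⟩ ↦ by
    refine ⟨?_, hzm⟩
    have := hinv zero_le_one hz
    rw [← φ.map_add] at this
    simpa using this
  -- `φ n` moves `S` to another connected set through `P` and `Q`, which meets `{V = m}`.
  have hne (n : ℕ) : (D n).Nonempty := by
    have hcont : Continuous fun y ↦ V (φ n y) := hV.comp (φ.continuous_toFun n)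
    obtain ⟨y, hyS, hy⟩ := hS.intermediate_value hQS hPS hcont.continuousOn
      (by simpa only [hP, hQ] using hm)
    exact ⟨φ n y, by simpa [← φ.map_add] using hSC hyS, hy⟩
  have hclosed (n : ℕ) : IsClosed (D n) :=
    (hC.isClosed.preimage (φ.continuous_toFun _)).inter (isClosed_singleton.preimage hV)
  have hcompact : IsCompact (D 0) :=
    hC.of_isClosed_subset (hclosed 0) fun z hz ↦ by simpa using hz.1
  obtain ⟨z, hz⟩ := IsCompact.nonempty_iInter_of_sequence_nonempty_isCompact_isClosed D hanti hne
    hcompact hclosed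
  rw [mem_iInter] at hz
  refine ⟨z, (hz 0).2, fun t ↦ ?_⟩
  obtain ⟨n, hn⟩ := exists_nat_ge (-t)
  have := hinv (by linarith : 0 ≤ t + n) (hz n).1
  rwa [← φ.map_add, add_neg_cancel_right] at this

theorem exists_heteroclinic_orbit {S : Set X} {P Q : X} (hC : IsCompact C)
    (hinv : IsForwardInvariant φ C) (hV : Continuous V) (hanti : ∀ z, Antitone fun t ↦ V (φ t z))
    (hS : IsPreconnected S) (hSC : S ⊆ C) (hPS : P ∈ S) (hQS : Q ∈ S)
    (hP : ∀ t, φ t P = P) (hQ : ∀ t, φ t Q = Q) (hQP : V Q < V P)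
    (hconst : ∀ q ∈ C, (∀ t, V (φ t q) = V q) → q = P ∨ q = Q) :
    ∃ z, (∀ t, φ t z ∈ C) ∧ Tendsto (φ · z) atBot (𝓝 P) ∧ Tendsto (φ · z) atTop (𝓝 Q) := by
  obtain ⟨m, hQm, hmP⟩ := exists_between hQP
  obtain ⟨z, rfl, hzC⟩ := exists_forall_mem_of_isForwardInvariant hC hinv hV hS hSC hPS hQS hP hQ
    ⟨hQm.le, hmP.le⟩
  have hbdd := (hC.image hV).isBounded
  have hsub : range (fun t ↦ V (φ t z)) ⊆ V '' C := range_subset_iff.mpr fun t ↦ ⟨_, hzC t, rfl⟩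
  have hbot := tendsto_atBot_ciSup (hanti z) (hbdd.bddAbove.mono hsub)
  have htop := tendsto_atTop_ciInf (hanti z) (hbdd.bddBelow.mono hsub)
  have hlimit {l : Filter ℝ} {e : ℝ} {q : X} (hl : ∀ s, Tendsto (s + ·) l l)
      (he : Tendsto (fun t ↦ V (φ t z)) l (𝓝 e)) (hqC : q ∈ C)
      (hq : MapClusterPt q l (φ · z)) : V q = e ∧ (q = P ∨ q = Q) := by
    have hVq := lyapunov_eq_of_mapClusterPt hV hl he hq
    have hq0 : V q = e := by simpa using hVq 0
    exact ⟨hq0, hconst q hqC fun t ↦ (hVq t).trans hq0.symm⟩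
  refine ⟨z, hzC, hC.tendsto_nhds_of_unique_mapClusterPt (.of_forall hzC) fun q hqC hq ↦ ?_,
    hC.tendsto_nhds_of_unique_mapClusterPt (.of_forall hzC) fun q hqC hq ↦ ?_⟩
  · obtain ⟨hqe, hqPQ⟩ := hlimit (fun s ↦ tendsto_atBot_add_const_left _ s tendsto_id) hbot hqC hq
    have hle : V z ≤ V q := hqe ▸ by simpa using (hanti z).ge_of_tendsto hbot 0
    exact hqPQ.resolve_right fun h ↦ (hQm.trans_le hle).ne' (by rw [h])
  · obtain ⟨hqe, hqPQ⟩ := hlimit (fun s ↦ tendsto_atTop_add_const_left _ s tendsto_id) htop hqC hq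
    have hle : V q ≤ V z := hqe ▸ by simpa using (hanti z).le_of_tendsto htop 0
    exact hqPQ.resolve_left fun h ↦ (hle.trans_lt hmP).ne (by rw [h])

end Lyapunov

theorem tendsto_atTop_of_hasDerivAt_ge {f f' : ℝ → ℝ} {η : ℝ} (hf : ∀ x, HasDerivAt f (f' x) x)
    (hη : 0 < η) (hf' : ∀ᶠ x in atTop, η ≤ f' x) : Tendsto f atTop atTop := by
  obtain ⟨c, hc⟩ := eventually_atTop.mp hf'
  have hlin : Tendsto (fun x ↦ f c + η * (x - c)) atTop atTop :=
    tendsto_atTop_add_const_left _ _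
      ((tendsto_atTop_add_const_right _ (-c) tendsto_id).const_mul_atTop hη)
  refine tendsto_atTop_mono' atTop ?_ hlin
  filter_upwards [eventually_ge_atTop c] with x hx
  have := (convex_Ici c).mul_sub_le_image_sub_of_le_deriv (f := f)
    (HasDerivAt.continuousOn fun x _ ↦ hf x)
    (fun x _ ↦ (hf x).differentiableAt.differentiableWithinAt)
    (fun x hx ↦ (hc x (interior_subset hx)).trans_eq (hf x).deriv.symm) c self_mem_Ici x hx hx
  linarith

section Lienard

variable {d α : ℝ} {L b F Φ : ℝ → ℝ} {z : ℝ → ℝ × ℝ}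

/-- The oscillator `d x'' + b(x) x' + F(x) = 0` as a first-order system in the Liénard variables
`(x, y)`, `y = d x' + L x`, where `L` is a primitive of the friction `b`. Unlike the phase plane
`(x, x')`, these variables give a globally Lipschitz field when `L` and `F` are Lipschitz. -/
noncomputable def lienardField (d : ℝ) (L F : ℝ → ℝ) (q : ℝ × ℝ) : ℝ × ℝ :=
  ((q.2 - L q.1) / d, -F q.1)

/-- The energy `d x'² / 2 + Φ x` of the oscillator in the Liénard variables, for a primitive `Φ`
of the force `F`; it is the Lyapunov function of the flow. -/
noncomputable def lienardEnergy (d : ℝ) (L Φ : ℝ → ℝ) (q : ℝ × ℝ) : ℝ :=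
  (q.2 - L q.1) ^ 2 / (2 * d) + Φ q.1

/-- The part of the phase plane to the right of `α` whose energy does not exceed that of the rest
point above `α`; it is the compact set that traps the connecting orbit. -/
def lienardWell (d : ℝ) (L Φ : ℝ → ℝ) (α : ℝ) : Set (ℝ × ℝ) :=
  {q | α ≤ q.1 ∧ lienardEnergy d L Φ q ≤ Φ α}

theorem lipschitzWith_lienardField {K B : ℝ≥0} (d : ℝ) (hL : LipschitzWith B L)
    (hF : LipschitzWith K F) :
    LipschitzWith (max ((1 + B) / ‖d‖₊) K) (lienardField d L F) := by
  have hfst := (lipschitzWith_smul d⁻¹).comp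
    (LipschitzWith.prod_snd.sub (hL.comp LipschitzWith.prod_fst))
  unfold lienardField
  simpa [Function.comp_def, inv_mul_eq_div] using
    hfst.prodMk (hF.comp LipschitzWith.prod_fst).neg

theorem lienardField_eq_zero_iff (hd : d ≠ 0) {q : ℝ × ℝ} :
    lienardField d L F q = 0 ↔ q.2 = L q.1 ∧ F q.1 = 0 := by
  simp [lienardField, Prod.ext_iff, hd, sub_eq_zero]

theorem continuous_lienardEnergy (d : ℝ) (hL : Continuous L) (hΦ : Continuous Φ) :
    Continuous (lienardEnergy d L Φ) := by
  unfold lienardEnergy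
  fun_prop

theorem lienardEnergy_self (x : ℝ) : lienardEnergy d L Φ (x, L x) = Φ x := by
  simp [lienardEnergy]

theorem hasDerivAt_fst_of_lienardField (hz : IsIntegralCurve z fun _ ↦ lienardField d L F) (t : ℝ) :
    HasDerivAt (fun s ↦ (z s).1) (((z t).2 - L (z t).1) / d) t :=
  (hz t).fst

theorem hasDerivAt_velocity_of_lienardField (hL : ∀ x, HasDerivAt L (b x) x)
    (hz : IsIntegralCurve z fun _ ↦ lienardField d L F) (t : ℝ) :
    HasDerivAt (fun s ↦ ((z s).2 - L (z s).1) / d)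
      (-(b (z t).1 * (((z t).2 - L (z t).1) / d) + F (z t).1) / d) t := by
  have hsnd : HasDerivAt (fun s ↦ (z s).2) (-F (z t).1) t := (hz t).snd
  refine ((hsnd.sub ((hL _).comp t (hasDerivAt_fst_of_lienardField hz t))).div_const d).congr_deriv
    ?_
  ring

theorem hasDerivAt_lienardEnergy (hd : d ≠ 0) (hL : ∀ x, HasDerivAt L (b x) x)
    (hΦ : ∀ x, HasDerivAt Φ (F x) x) (hz : IsIntegralCurve z fun _ ↦ lienardField d L F) (t : ℝ) :
    HasDerivAt (fun s ↦ lienardEnergy d L Φ (z s))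
      (-(b (z t).1 * (((z t).2 - L (z t).1) / d) ^ 2)) t := by
  have henergy : (fun s ↦ lienardEnergy d L Φ (z s)) =
      fun s ↦ d / 2 * (((z s).2 - L (z s).1) / d) ^ 2 + Φ (z s).1 := by
    funext s
    simp only [lienardEnergy]
    field_simp
  rw [henergy]
  refine ((((hasDerivAt_velocity_of_lienardField hL hz t).pow 2).const_mul (d / 2)).add
    ((hΦ _).comp t (hasDerivAt_fst_of_lienardField hz t))).congr_deriv ?_
  simp only [Nat.cast_ofNat, Nat.add_one_sub_one, pow_one]
  field_simp
  ring

theorem antitone_lienardEnergy (hd : d ≠ 0) (hL : ∀ x, HasDerivAt L (b x) x)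
    (hΦ : ∀ x, HasDerivAt Φ (F x) x) (hb : ∀ x, 0 ≤ b x)
    (hz : IsIntegralCurve z fun _ ↦ lienardField d L F) :
    Antitone fun t ↦ lienardEnergy d L Φ (z t) :=
  antitone_of_hasDerivAt_nonpos (hasDerivAt_lienardEnergy hd hL hΦ hz) fun _ ↦
    neg_nonpos.mpr (mul_nonneg (hb _) (sq_nonneg _))

theorem lienardField_eq_zero_of_lienardEnergy_const (hd : d ≠ 0)
    (hL : ∀ x, HasDerivAt L (b x) x) (hΦ : ∀ x, HasDerivAt Φ (F x) x) (hb : ∀ x, 0 < b x)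
    (hz : IsIntegralCurve z fun _ ↦ lienardField d L F) {e : ℝ}
    (he : ∀ t, lienardEnergy d L Φ (z t) = e) (t : ℝ) : lienardField d L F (z t) = 0 := by
  have hvel (s : ℝ) : ((z s).2 - L (z s).1) / d = 0 := by
    have hderiv := hasDerivAt_lienardEnergy hd hL hΦ hz s
    simp only [he] at hderiv
    simpa [(hb _).ne'] using hderiv.unique (hasDerivAt_const s e)
  have hforce : F (z t).1 = 0 := by
    have hderiv := hasDerivAt_velocity_of_lienardField hL hz t
    simp only [hvel] at hderiv
    simpa [hd] using hderiv.unique (hasDerivAt_const t (0 : ℝ))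
  exact Prod.ext (hvel t) (by simp [lienardField, hforce])

theorem eq_of_mem_lienardWell (hd : 0 < d) {q : ℝ × ℝ} (hq : q ∈ lienardWell d L Φ α)
    (hqα : q.1 = α) : q = (α, L α) := by
  obtain ⟨x, y⟩ := q
  obtain rfl : x = α := hqα
  have hsq : (y - L x) ^ 2 / (2 * d) ≤ 0 := by simpa [lienardEnergy] using hq.2
  have hsq' : (y - L x) ^ 2 ≤ 0 := by
    simpa using (div_le_iff₀ (by positivity)).mp hsq
  rw [sub_eq_zero.mp (pow_eq_zero_iff two_ne_zero |>.mp (hsq'.antisymm (sq_nonneg _)))]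

theorem isForwardInvariant_lienardWell {φ : Flow ℝ (ℝ × ℝ)} (hd : 0 < d)
    (hL : ∀ x, HasDerivAt L (b x) x) (hΦ : ∀ x, HasDerivAt Φ (F x) x) (hb : ∀ x, 0 ≤ b x)
    (hφ : ∀ q, IsIntegralCurve (φ · q) fun _ ↦ lienardField d L F)
    (hα : ∀ t, φ t (α, L α) = (α, L α)) : IsForwardInvariant φ (lienardWell d L Φ α) := by
  intro t ht q hq
  have henergy {s : ℝ} (hs : 0 ≤ s) : lienardEnergy d L Φ (φ s q) ≤ Φ α := by
    simpa using (antitone_lienardEnergy hd.ne' hL hΦ hb (hφ q) hs).trans (by simpa using hq.2)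
  refine ⟨le_of_not_gt fun hlt ↦ hlt.ne ?_, henergy ht⟩
  -- An orbit crossing `x = α` has no kinetic energy left there, so it is the rest point itself.
  have hcont : Continuous fun s ↦ (φ s q).1 := continuous_fst.comp (hφ q).continuous
  obtain ⟨s, hs, hsα⟩ := intermediate_value_Icc' ht hcont.continuousOn
    ⟨hlt.le, by simpa using hq.1⟩
  have hrest : φ s q = (α, L α) := eq_of_mem_lienardWell hd ⟨hsα.ge, henergy hs.1⟩ hsα
  have := φ.map_add (t - s) s q
  rw [sub_add_cancel, hrest, hα] at this
  rw [this]

theorem isCompact_lienardWell (hd : 0 < d) (hL : Continuous L) (hΦ : Continuous Φ)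
    (hΦtop : Tendsto Φ atTop atTop) (α : ℝ) : IsCompact (lienardWell d L Φ α) := by
  obtain ⟨R, hR⟩ := eventually_atTop.mp (hΦtop.eventually_gt_atTop (Φ α))
  obtain ⟨m, hm⟩ := isCompact_Icc.bddBelow_image (hΦ.continuousOn (s := Icc α R))
  set r := √(2 * d * (Φ α - m))
  have hbox : IsCompact ((fun q : ℝ × ℝ ↦ (q.1, L q.1 + q.2)) '' (Icc α R ×ˢ Icc (-r) r)) :=
    (isCompact_Icc.prod isCompact_Icc).image (by fun_prop)
  refine hbox.of_isClosed_subset ?_ fun ⟨x, y⟩ ⟨hx, hxy⟩ ↦ ?_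
  · exact (isClosed_le continuous_const continuous_fst).inter
      (isClosed_le (continuous_lienardEnergy d hL hΦ) continuous_const)
  · simp only [lienardEnergy] at hx hxy
    have hkin : 0 ≤ (y - L x) ^ 2 / (2 * d) := by positivity
    have hxR : x ≤ R := le_of_not_gt fun h ↦ (hR x h.le).not_ge (by linarith)
    have hmx : m ≤ Φ x := hm ⟨x, ⟨hx, hxR⟩, rfl⟩
    have hsq : (y - L x) ^ 2 ≤ 2 * d * (Φ α - m) := by
      rw [← div_le_iff₀' (by positivity)]
      linarith
    exact ⟨(x, y - L x), ⟨⟨hx, hxR⟩, abs_le.mp (Real.abs_le_sqrt hsq)⟩, by simp⟩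

theorem exists_heteroclinic_lienardField {K B : ℝ≥0} {β : ℝ} (hd : 0 < d) (hαβ : α < β)
    (hL : ∀ x, HasDerivAt L (b x) x) (hLlip : LipschitzWith B L) (hb : ∀ x, 0 < b x)
    (hΦ : ∀ x, HasDerivAt Φ (F x) x) (hΦtop : Tendsto Φ atTop atTop) (hF : LipschitzWith K F)
    (hα : F α = 0) (hneg : ∀ x ∈ Ioo α β, F x < 0) (hβ : F β = 0) (hne : ∀ x > β, F x ≠ 0) :
    ∃ z : ℝ → ℝ × ℝ, IsIntegralCurve z (fun _ ↦ lienardField d L F) ∧ (∀ t, α ≤ (z t).1) ∧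
      Tendsto z atBot (𝓝 (α, L α)) ∧ Tendsto z atTop (𝓝 (β, L β)) := by
  have hΦc : Continuous Φ := continuous_iff_continuousAt.mpr fun x ↦ (hΦ x).continuousAt
  have hlip := lipschitzWith_lienardField d hLlip hF
  obtain ⟨φ, hφ⟩ := exists_flow_isIntegralCurve hlip
  have hrest {x : ℝ} (hx : F x = 0) (t : ℝ) : φ t (x, L x) = (x, L x) :=
    apply_eq_self_of_isIntegralCurve hlip hφ ((lienardField_eq_zero_iff hd.ne').mpr ⟨rfl, hx⟩) t
  have hΦanti : StrictAntiOn Φ (Icc α β) :=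
    strictAntiOn_of_hasDerivWithinAt_neg (convex_Icc α β) hΦc.continuousOn
      (fun x _ ↦ (hΦ x).hasDerivWithinAt) fun x hx ↦ hneg x (by rwa [interior_Icc] at hx)
  have hαmem : α ∈ Icc α β := left_mem_Icc.mpr hαβ.le
  have hβmem : β ∈ Icc α β := right_mem_Icc.mpr hαβ.le
  have hgraph : (fun x ↦ (x, L x)) '' Icc α β ⊆ lienardWell d L Φ α := by
    rintro _ ⟨x, hx, rfl⟩
    exact ⟨hx.1, (lienardEnergy_self x).trans_le (hΦanti.antitoneOn hαmem hx hx.1)⟩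
  have hequilibria : ∀ q ∈ lienardWell d L Φ α,
      (∀ t, lienardEnergy d L Φ (φ t q) = lienardEnergy d L Φ q) →
        q = (α, L α) ∨ q = (β, L β) := by
    rintro ⟨x, y⟩ ⟨hx : α ≤ x, -⟩ hconst
    have hzero := lienardField_eq_zero_of_lienardEnergy_const hd.ne' hL hΦ hb (hφ _) hconst 0
    obtain ⟨rfl : y = L x, hFx : F x = 0⟩ := by
      simpa using (lienardField_eq_zero_iff hd.ne').mp hzero
    rcases hx.eq_or_lt with rfl | hαx
    · exact .inl rfl
    rcases lt_trichotomy x β with hxβ | rfl | hβx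
    exacts [absurd hFx (hneg x ⟨hαx, hxβ⟩).ne, .inr rfl, absurd hFx (hne x hβx)]
  obtain ⟨z, hz, hbot, htop⟩ := exists_heteroclinic_orbit (P := (α, L α)) (Q := (β, L β))
    (isCompact_lienardWell hd hLlip.continuous hΦc hΦtop α)
    (isForwardInvariant_lienardWell hd hL hΦ (fun x ↦ (hb x).le) hφ (hrest hα))
    (continuous_lienardEnergy d hLlip.continuous hΦc)
    (fun q ↦ antitone_lienardEnergy hd.ne' hL hΦ (fun x ↦ (hb x).le) (hφ q))
    (isPreconnected_Icc.image _ (continuous_id.prodMk hLlip.continuous).continuousOn) hgraph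
    (mem_image_of_mem _ hαmem) (mem_image_of_mem _ hβmem) (hrest hα) (hrest hβ)
    (by simpa only [lienardEnergy_self] using hΦanti hαmem hβmem hαβ) hequilibria
  exact ⟨(φ · z), hφ z, fun t ↦ (hz t).1, hbot, htop⟩

theorem exists_heteroclinic_damped_oscillator {K B : ℝ≥0} {β : ℝ} (hd : 0 < d) (hαβ : α < β)
    (hb : Continuous b) (hbpos : ∀ x, 0 < b x) (hbB : ∀ x, b x ≤ B)
    (hF : LipschitzWith K F) (hα : F α = 0) (hneg : ∀ x ∈ Ioo α β, F x < 0) (hβ : F β = 0)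
    (hne : ∀ x > β, F x ≠ 0) (hinf : ∃ η > 0, ∀ᶠ x in atTop, η ≤ F x) :
    ∃ x u : ℝ → ℝ, (∀ t, α ≤ x t) ∧ (∀ t, HasDerivAt x (u t) t) ∧
      (∀ t, HasDerivAt u (-(b (x t) * u t + F (x t)) / d) t) ∧
      Tendsto x atBot (𝓝 α) ∧ Tendsto x atTop (𝓝 β) ∧
      Tendsto u atBot (𝓝 0) ∧ Tendsto u atTop (𝓝 0) := by
  have hΦ (x : ℝ) : HasDerivAt (fun x ↦ ∫ s in α..x, F s) (F x) x :=
    (hF.continuous.integral_hasStrictDerivAt α x).hasDerivAt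
  have hL (x : ℝ) : HasDerivAt (fun x ↦ ∫ s in α..x, b s) (b x) x :=
    (hb.integral_hasStrictDerivAt α x).hasDerivAt
  set L : ℝ → ℝ := fun x ↦ ∫ s in α..x, b s
  have hLlip : LipschitzWith B L :=
    lipschitzWith_of_nnnorm_deriv_le (fun x ↦ (hL x).differentiableAt) fun x ↦ by
      rw [(hL x).deriv, ← NNReal.coe_le_coe, coe_nnnorm, Real.norm_of_nonneg (hbpos x).le]
      exact hbB x
  obtain ⟨η, hη, hFη⟩ := hinf
  obtain ⟨z, hz, hαz, hbot, htop⟩ := exists_heteroclinic_lienardField hd hαβ hL hLlip hbpos hΦ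
    (tendsto_atTop_of_hasDerivAt_ge hΦ hη hFη) hF hα hneg hβ hne
  have hvelocity {l : Filter ℝ} {s : ℝ} (hs : Tendsto z l (𝓝 (s, L s))) :
      Tendsto (fun t ↦ ((z t).2 - L (z t).1) / d) l (𝓝 0) := by
    have hcont : Continuous fun q : ℝ × ℝ ↦ (q.2 - L q.1) / d := by
      have := hLlip.continuous
      fun_prop
    exact (hcont.tendsto' _ _ (by simp)).comp hs
  exact ⟨fun t ↦ (z t).1, fun t ↦ ((z t).2 - L (z t).1) / d, hαz,
    hasDerivAt_fst_of_lienardField hz, hasDerivAt_velocity_of_lienardField hL hz,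
    (continuous_fst.tendsto _).comp hbot, (continuous_fst.tendsto _).comp htop,
    hvelocity hbot, hvelocity htop⟩

end Lienard

section ConvexForce

variable {f : ℝ → ℝ} {d α β : ℝ}

theorem strictAntiOn_of_hasDerivAt_neg {D : Set ℝ} {f' : ℝ → ℝ} (hD : Convex ℝ D)
    (hf : ∀ x ∈ D, HasDerivAt f (f' x) x) (hneg : ∀ x ∈ D, f' x < 0) : StrictAntiOn f D :=
  strictAntiOn_of_hasDerivWithinAt_neg hD (HasDerivAt.continuousOn hf)
    (fun x hx ↦ (hf x (interior_subset hx)).hasDerivWithinAt)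
    fun x hx ↦ hneg x (interior_subset hx)

theorem strictConvexOn_of_hasDerivAt_hasDerivAt_pos {D : Set ℝ} {f' f'' : ℝ → ℝ} (hD : Convex ℝ D)
    (hf : ∀ x ∈ D, HasDerivAt f (f' x) x) (hf' : ∀ x ∈ D, HasDerivAt f' (f'' x) x)
    (hpos : ∀ x ∈ D, 0 < f'' x) : StrictConvexOn ℝ D f := by
  have hmono : StrictMonoOn f' D :=
    strictMonoOn_of_hasDerivWithinAt_pos hD (HasDerivAt.continuousOn hf')
      (fun x hx ↦ (hf' x (interior_subset hx)).hasDerivWithinAt)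
      fun x hx ↦ hpos x (interior_subset hx)
  exact ((hmono.mono interior_subset).congr fun x hx ↦
    (hf x (interior_subset hx)).deriv.symm).strictConvexOn_of_deriv hD (HasDerivAt.continuousOn hf)

theorem exists_lipschitzOnWith_Ici_of_convexOn_antitoneOn {a b : ℝ} (hab : a < b)
    (hf : ConvexOn ℝ (Ioi a) f) (hanti : AntitoneOn f (Ioi a)) :
    ∃ K : ℝ≥0, LipschitzOnWith K f (Ici b) := by
  obtain ⟨c, hac, hcb⟩ := exists_between hab
  have hmem {x : ℝ} (hx : b ≤ x) : x ∈ Ioi a := hab.trans_le hx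
  have hslope {x y : ℝ} (hx : b ≤ x) (hxy : x < y) :
      (f b - f c) / (b - c) ≤ (f y - f x) / (y - x) :=
    (hf.secant_mono hac (hmem le_rfl) (hmem hx) hcb.ne' (hcb.trans_le hx).ne' hx).trans
      (hf.slope_mono_adjacent hac (hmem (hx.trans hxy.le)) (hcb.trans_le hx) hxy)
  set k := (f c - f b) / (b - c) with hk
  have hk₀ : 0 ≤ k := div_nonneg (sub_nonneg.mpr (hanti hac (hmem le_rfl) hcb.le)) (by linarith)
  refine ⟨k.toNNReal, .of_dist_le_mul fun x hx y hy ↦ ?_⟩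
  rw [Real.coe_toNNReal k hk₀, Real.dist_eq, Real.dist_eq]
  wlog hxy : x < y generalizing x y
  · rcases (not_lt.mp hxy).eq_or_lt with rfl | hyx
    · simp
    · simpa only [abs_sub_comm] using this y hy x hx hyx
  rw [abs_of_nonneg (sub_nonneg.mpr (hanti (hmem hx) (hmem hy) hxy.le)), abs_sub_comm,
    abs_of_pos (sub_pos.mpr hxy)]
  have := hslope hx hxy
  rw [le_div_iff₀ (sub_pos.mpr hxy), ← neg_sub (f c), neg_div, ← hk] at this
  linarith

theorem exists_heteroclinic_damped_oscillator_of_strictConvexOn {K B : ℝ≥0} {b : ℝ → ℝ}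
    (hd : 0 < d) (hαβ : α < β) (hb : ContinuousOn b (Ici α)) (hbpos : ∀ x ≥ α, 0 < b x)
    (hbB : ∀ x ≥ α, b x ≤ B) (hf : StrictConvexOn ℝ (Ici α) f) (hlip : LipschitzOnWith K f (Ici α))
    (hα : f α = 0) (hβ : f β = 0) :
    ∃ x u : ℝ → ℝ, (∀ t, α ≤ x t) ∧ (∀ t, HasDerivAt x (u t) t) ∧
      (∀ t, HasDerivAt u (-(b (x t) * u t + f (x t)) / d) t) ∧
      Tendsto x atBot (𝓝 α) ∧ Tendsto x atTop (𝓝 β) ∧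
      Tendsto u atBot (𝓝 0) ∧ Tendsto u atTop (𝓝 0) := by
  have hneg : ∀ x ∈ Ioo α β, f x < 0 := fun x hx ↦ by
    simpa [hα, hβ] using hf.lt_on_openSegment self_mem_Ici hαβ.le hαβ.ne
      (by rwa [openSegment_eq_Ioo hαβ])
  obtain ⟨γ, hγ⟩ := exists_between hαβ
  have hmono : StrictMonoOn f (Ici β) :=
    (hf.convexOn.strictMonoOn hγ.1.le hγ.2 ((hneg γ hγ).trans_eq hβ.symm)).mono
      (subset_inter (Ici_subset_Ici.mpr hαβ.le) subset_rfl)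
  have hpos {x : ℝ} (hx : β < x) : 0 < f x := hβ ▸ hmono self_mem_Ici hx.le hx
  have hmax {x : ℝ} (hx : α ≤ x) : max x α = x := max_eq_left hx
  have hmaxlip : LipschitzWith 1 fun x : ℝ ↦ max x α := LipschitzWith.id.max_const α
  -- The orbit stays in `[α, ∞)`, where precomposing with `max · α` changes nothing.
  obtain ⟨x, u, hx, hxd, hud, hlim⟩ := exists_heteroclinic_damped_oscillator
    (F := fun x ↦ f (max x α)) (b := fun x ↦ b (max x α)) hd hαβ
    (hb.comp_continuous hmaxlip.continuous fun x ↦ le_max_right x α)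
    (fun x ↦ hbpos _ (le_max_right x α)) (fun x ↦ hbB _ (le_max_right x α))
    (lipschitzOnWith_univ.mp (hlip.comp hmaxlip.lipschitzOnWith fun x _ ↦ le_max_right x α))
    (by simp [hα]) (fun x hx ↦ by simpa only [hmax hx.1.le] using hneg x hx)
    (by simp [hmax hαβ.le, hβ])
    (fun x hx ↦ by simpa only [hmax (hαβ.trans hx).le] using (hpos hx).ne')
    ⟨f (β + 1), hpos (lt_add_one β), by
      filter_upwards [eventually_ge_atTop (β + 1)] with x hx
      rw [hmax (by linarith)]
      exact hmono.monotoneOn (lt_add_one β).le ((lt_add_one β).le.trans hx) hx⟩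
  simp only [hmax (hx _)] at hud
  exact ⟨x, u, hx, hxd, hud, hlim⟩

theorem exists_shock_profile_of_strictConvexOn {K : ℝ≥0} (hd : 0 < d) (hα₀ : 0 < α) (hαβ : α < β)
    (hf : StrictConvexOn ℝ (Ici α) f) (hlip : LipschitzOnWith K f (Ici α))
    (hα : f α = 0) (hβ : f β = 0) :
    ∃ v v' v'' : ℝ → ℝ, (∀ x, 0 < v x) ∧ (∀ x, HasDerivAt v (v' x) x) ∧
      (∀ x, HasDerivAt v' (v'' x) x) ∧ Continuous v'' ∧
      (∀ x, f (v x) = v' x / v x - d * v'' x) ∧ Tendsto v atBot (𝓝 β) ∧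
      Tendsto v atTop (𝓝 α) ∧ Tendsto v' atBot (𝓝 0) ∧ Tendsto v' atTop (𝓝 0) := by
  have hpos {x : ℝ} (hx : α ≤ x) : 0 < x := hα₀.trans_le hx
  obtain ⟨x, u, hx, hxd, hud, hxbot, hxtop, hubot, hutop⟩ :=
    exists_heteroclinic_damped_oscillator_of_strictConvexOn (b := (·⁻¹))
      (B := (α⁻¹).toNNReal) hd hαβ (continuousOn_id.inv₀ fun x hx ↦ (hpos hx).ne')
      (fun x hx ↦ inv_pos.mpr (hpos hx))
      (fun x hx ↦ (inv_anti₀ hα₀ hx).trans (Real.le_coe_toNNReal _)) hf hlip hα hβ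
  have hxpos (t : ℝ) : 0 < x t := hpos (hx t)
  have hxc : Continuous x := continuous_iff_continuousAt.mpr fun t ↦ (hxd t).continuousAt
  have huc : Continuous u := continuous_iff_continuousAt.mpr fun t ↦ (hud t).continuousAt
  have hfc : Continuous fun t ↦ f (x t) := hlip.continuousOn.comp_continuous hxc hx
  refine ⟨fun t ↦ x (-t), fun t ↦ -u (-t), fun t ↦ -((x (-t))⁻¹ * u (-t) + f (x (-t))) / d,
    fun t ↦ hxpos _, fun t ↦ ?_, fun t ↦ ?_, ?_, fun t ↦ ?_, hxtop.comp tendsto_neg_atBot_atTop,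
    hxbot.comp tendsto_neg_atTop_atBot, ?_, ?_⟩
  · simpa [Function.comp_def] using (hxd (-t)).comp t (hasDerivAt_neg t)
  · exact ((hud (-t)).comp t (hasDerivAt_neg t)).neg.congr_deriv (by ring)
  · exact ((((hxc.inv₀ fun t ↦ (hxpos t).ne').mul huc).add hfc).neg.div_const d).comp
      continuous_neg
  · field [(hxpos (-t)).ne']
  · simpa using (hutop.comp tendsto_neg_atBot_atTop).neg
  · simpa using (hubot.comp tendsto_neg_atTop_atBot).neg

end ConvexForce

theorem profile_existence_general (p : ℝ → ℝ) (hconv : StrictConvexOn ℝ (Ioi 0) p)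
    (hanti : StrictAntiOn p (Ioi 0)) (vp vm a d : ℝ) (hvp : 0 < vp) (hvlt : vp < vm) (hd : 0 < d)
    (ha : a = -(vp - vm) / (p vp - p vm)) :
    ∃ vhat vhat' vhat'' : ℝ → ℝ,
      (∀ x, 0 < vhat x) ∧
      (∀ x, HasDerivAt vhat (vhat' x) x) ∧
      (∀ x, HasDerivAt vhat' (vhat'' x) x) ∧
      Continuous vhat'' ∧
      (∃ x y, vhat x ≠ vhat y) ∧
      (∀ x, vhat x - vm + a * (p (vhat x) - p vm) = vhat' x / vhat x - d * vhat'' x) ∧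
      Tendsto vhat atBot (𝓝 vm) ∧
      Tendsto vhat atTop (𝓝 vp) ∧
      Tendsto vhat' atBot (𝓝 0) ∧
      Tendsto vhat' atTop (𝓝 0) := by
  have hpv : 0 < p vp - p vm := sub_pos.mpr (hanti hvp (hvp.trans hvlt) hvlt)
  have ha₀ : 0 < a := ha ▸ div_pos (by linarith) hpv
  obtain ⟨K, hK⟩ := exists_lipschitzOnWith_Ici_of_convexOn_antitoneOn hvp hconv.convexOn
    hanti.antitoneOn
  obtain ⟨K', hlip⟩ : ∃ K', LipschitzOnWith K' (fun v ↦ v - vm + a * (p v - p vm)) (Ici vp) :=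
    ⟨_, (LipschitzWith.id.sub (.const vm)).lipschitzOnWith.add
      ((lipschitzWith_smul a).comp_lipschitzOnWith
        (hK.sub (LipschitzWith.const (p vm)).lipschitzOnWith))⟩
  have hf : StrictConvexOn ℝ (Ici vp) fun v ↦ v - vm + a * (p v - p vm) := by
    refine ⟨convex_Ici vp, fun x hx y hy hxy s t hs ht hst ↦ ?_⟩
    have hlt := mul_lt_mul_of_pos_left
      (hconv.2 (hvp.trans_le hx) (hvp.trans_le hy) hxy hs ht hst) ha₀
    obtain rfl : t = 1 - s := by linarith
    simp only [smul_eq_mul] at hlt ⊢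
    linarith
  obtain ⟨v, v', v'', hpos, hv, hv', hv'', hode, hbot, htop, hlim'⟩ :=
    exists_shock_profile_of_strictConvexOn hd hvp hvlt hf hlip
      (by rw [ha, div_mul_cancel₀ _ hpv.ne']; ring) (by ring)
  refine ⟨v, v', v'', hpos, hv, hv', hv'', ?_, hode, hbot, htop, hlim'⟩
  by_contra! hconst
  have hv0 : v = fun _ ↦ v 0 := funext fun x ↦ hconst x 0
  rw [hv0, tendsto_const_nhds_iff] at hbot htop
  exact hvlt.ne (htop.symm.trans hbot)

/-- Existence of shock profiles (heteroclinic connections from `vm`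
to `vp`) for Slemrod's model with an ideal gas law and capillarity `d > 0`. -/
theorem profile_existence
    (p p' p'' : ℝ → ℝ)
    (hp'd : ∀ v ∈ Ioi (0:ℝ), HasDerivAt p (p' v) v)
    (hp''d : ∀ v ∈ Ioi (0:ℝ), HasDerivAt p' (p'' v) v)
    (hp''cont : ContinuousOn p'' (Ioi 0))
    (hp'neg : ∀ v ∈ Ioi (0:ℝ), p' v < 0)
    (hp''pos : ∀ v ∈ Ioi (0:ℝ), 0 < p'' v)
    (vp vm a d : ℝ)
    (hvp : 0 < vp) (hvlt : vp < vm) (hd : 0 < d)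
    (ha : a = -(vp - vm) / (p vp - p vm)) :
    ∃ vhat vhat' vhat'' : ℝ → ℝ,
      (∀ x, 0 < vhat x) ∧
      (∀ x, HasDerivAt vhat (vhat' x) x) ∧
      (∀ x, HasDerivAt vhat' (vhat'' x) x) ∧
      Continuous vhat'' ∧
      (∃ x y, vhat x ≠ vhat y) ∧
      (∀ x, vhat x - vm + a * (p (vhat x) - p vm) = vhat' x / vhat x - d * vhat'' x) ∧
      Tendsto vhat atBot (𝓝 vm) ∧
      Tendsto vhat atTop (𝓝 vp) ∧
      Tendsto vhat' atBot (𝓝 0) ∧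
      Tendsto vhat' atTop (𝓝 0) := by
  exact profile_existence_general p
    (strictConvexOn_of_hasDerivAt_hasDerivAt_pos (convex_Ioi 0) hp'd hp''d hp''pos)
    (strictAntiOn_of_hasDerivAt_neg (convex_Ioi 0) hp'd hp'neg) vp vm a d hvp hvlt hd ha
end

section
/- Fix v₋ > 0, d > 0, and a pressure law p : (0,∞) → ℝ of class C³ with p′ < 0 and p″ > 0. Then there exists ε₀ > 0 such that for every v₊ with 0 < v₋ − v₊ < ε₀, every shock profile v̂ (C² solution of v̂ − v₋ + a(p(v̂) − p(v₋)) = v̂′/v̂ − d v̂″ with a = −(v₊ − v₋)/(p(v₊) − p(v₋)), v̂(−∞) = v₋, v̂(+∞) = v₊, v̂′(±∞) = 0) is strictly decreasing, i.e. monotone. In other words, small-amplitude shocks of Slemrod's model are monotone for any fixed capillarity strength d. -/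
open Filter Topology Set

/-!
In the phase plane `(v, w) = (v, v')` the profile equation is a damped oscillator
`d w' = w / v - g v` whose force `g s = s - v₋ + a (p s - p v₋)` is convex and vanishes at `v₋`
and `v₊`. Three facts force a heteroclinic orbit from `v₋` to `v₊` to descend.

* Along an orbit the energy `d w² / 2 + ∫ g` increases. It vanishes at `(v₊, 0)`, so an orbit
  meeting the line `v = v₊` does so at the rest point itself, and is constant by uniqueness:
  `v > v₊`.
* Since `a = -1 / σ` with `σ` the secant slope of `p` over `[v₊, v₋]`, the slope of `g` at `v₋` is
  `1 - p'(v₋) / σ`, which is below `1 / (4 d v₋²)` at small amplitude. Then `v₋` is a node, and the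
  region below the line `w = (v - v₋) / (2 d v₋)`, whose slope is the mean of the two eigenvalues,
  is forward invariant in `v₊ < v < v₋`. An orbit overshooting `v₋` would return into that region
  and could not end at `(v₊, 0)`: `v < v₋`.
* Between `v₊` and `v₋` the force is nonpositive, so `w ≥ 0` persists once it holds and would keep
  `v` away from `v₊`: `w < 0`.
-/

section RealAnalysis

theorem image_nonpos_of_deriv_right_le_mul_of_pos {f f' : ℝ → ℝ} {K a b : ℝ} (hab : a ≤ b)
    (hf : ContinuousOn f (Icc a b)) (hf' : ∀ x ∈ Ico a b, HasDerivWithinAt f (f' x) (Ici x) x)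
    (ha : f a ≤ 0) (bound : ∀ x ∈ Ico a b, 0 < f x → f' x ≤ K * f x) : f b ≤ 0 := by
  refine le_of_forall_pos_le_add fun δ hδ ↦ ?_
  have hB : ∀ x, HasDerivAt (fun x ↦ δ * Real.exp ((K + 1) * (x - b)))
      ((K + 1) * (δ * Real.exp ((K + 1) * (x - b)))) x := fun x ↦
    (((((hasDerivAt_id x).sub_const b).const_mul (K + 1)).exp).const_mul δ).congr_deriv
      (by simp only [id]; ring)
  have hBpos : ∀ x, 0 < δ * Real.exp ((K + 1) * (x - b)) := fun x ↦ by positivity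
  have h := image_le_of_deriv_right_lt_deriv_boundary hf hf' (ha.trans (hBpos a).le) hB
    (fun x hx hfx ↦ by linarith [bound x hx (hfx ▸ hBpos x), hBpos x, congrArg (K * ·) hfx])
    (right_mem_Icc.2 hab)
  simpa using h

theorem exists_last_eq_of_eventually_lt {α β : Type*} [ConditionallyCompleteLinearOrder α]
    [TopologicalSpace α] [OrderTopology α] [DenselyOrdered α] [NoMaxOrder α] [LinearOrder β]
    [TopologicalSpace β] [OrderClosedTopology β] {f : α → β} {a : α} {b : β} (hf : Continuous f)
    (hlt : ∀ᶠ x in atTop, f x < b) (ha : b ≤ f a) : ∃ z, f z = b ∧ ∀ x, z < x → f x < b := by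
  have : Nonempty α := ⟨a⟩
  obtain ⟨N, hN⟩ := eventually_atTop.1 hlt
  have hbdd : BddAbove {x | b ≤ f x} := ⟨N, fun x hx ↦ le_of_not_ge fun h ↦ (hN x h).not_ge hx⟩
  have hafter : ∀ x, sSup {x | b ≤ f x} < x → f x < b := fun x hx ↦
    not_le.1 fun h ↦ (le_csSup hbdd h).not_gt hx
  refine ⟨sSup {x | b ≤ f x}, le_antisymm ?_ ?_, hafter⟩
  · refine le_of_tendsto (hf.continuousWithinAt (s := Ioi (sSup {x | b ≤ f x}))) ?_
    filter_upwards [self_mem_nhdsWithin] with x hx using (hafter x hx).le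
  · exact (isClosed_le continuous_const hf).csSup_mem ⟨a, ha⟩ hbdd

theorem hasDerivWithinAt_Ioi_nonpos_of_forall_gt_le {f : ℝ → ℝ} {f' z : ℝ}
    (hf : HasDerivWithinAt f f' (Ioi z) z) (hle : ∀ x, z < x → f x ≤ f z) : f' ≤ 0 := by
  refine le_of_tendsto ((hasDerivWithinAt_iff_tendsto_slope' self_notMem_Ioi).1 hf) ?_
  filter_upwards [self_mem_nhdsWithin] with x hx
  rw [slope_def_field]
  exact div_nonpos_of_nonpos_of_nonneg (sub_nonpos.2 (hle x hx)) (sub_nonneg.2 (le_of_lt hx))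

theorem hasDerivAt_integral_right_of_ordConnected {E : Type*} [NormedAddCommGroup E]
    [NormedSpace ℝ E] [CompleteSpace E] {g : ℝ → E} {s : Set ℝ} {a b : ℝ} (hs : IsOpen s)
    (hconn : s.OrdConnected) (hg : ContinuousOn g s) (ha : a ∈ s) (hb : b ∈ s) :
    HasDerivAt (fun u ↦ ∫ t in a..u, g t) (g b) b :=
  intervalIntegral.integral_hasDerivAt_right
    (hg.mono (hconn.uIcc_subset ha hb)).intervalIntegrable
    (hg.stronglyMeasurableAtFilter hs b hb) (hg.continuousAt (hs.mem_nhds hb))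

theorem eq_of_hasDerivAt_of_eq_zero {E : Type*} [NormedAddCommGroup E] [NormedSpace ℝ E]
    {F : E → E} {f : ℝ → E} {z : E} {K : NNReal} {U : Set E} {t₀ : ℝ} (hU : U ∈ 𝓝 z)
    (hF : LipschitzOnWith K F U) (hz : F z = 0) (hf : ∀ t, HasDerivAt f (F (f t)) t)
    (ht₀ : f t₀ = z) (t : ℝ) : f t = z := by
  have hcont : Continuous f := continuous_iff_continuousAt.2 fun t ↦ (hf t).continuousAt
  have hopen : IsOpen {t | f t = z} := isOpen_iff_eventually.2 fun t ht ↦ by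
    have hfU : ∀ᶠ s in 𝓝 t, f s ∈ U := hcont.continuousAt.eventually_mem (by rwa [ht])
    exact ODE_solution_unique_of_eventually (v := fun _ ↦ F) (s := fun _ ↦ U) (g := fun _ ↦ z)
      (.of_forall fun _ ↦ hF) (hfU.mono fun s hs ↦ ⟨hf s, hs⟩)
      (.of_forall fun s ↦ ⟨hz ▸ hasDerivAt_const s z, mem_of_mem_nhds hU⟩) ht
  exact eq_univ_iff_forall.1
    (IsClopen.eq_univ ⟨isClosed_eq hcont continuous_const, hopen⟩ ⟨t₀, ht₀⟩) t

end RealAnalysis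

/-- The phase-plane vector field of the equation `d v'' = v' / v - g v`: the first coordinate is the
specific volume `v`, the second its derivative. -/
noncomputable def slemrodField (d : ℝ) (g : ℝ → ℝ) (z : ℝ × ℝ) : ℝ × ℝ :=
  (z.2, (z.2 / z.1 - g z.1) / d)

theorem exists_lipschitzOnWith_slemrodField {d c y : ℝ} {g : ℝ → ℝ} {K : NNReal} {U : Set ℝ}
    (hc : c ≠ 0) (hU : U ∈ 𝓝 c) (hg : LipschitzOnWith K g U) :
    ∃ K', ∃ U' ∈ 𝓝 (c, y), LipschitzOnWith K' (slemrodField d g) U' := by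
  have hsmooth : ContDiffAt ℝ 1 (fun z : ℝ × ℝ ↦ (z.2, z.2 / z.1 / d)) (c, y) :=
    contDiffAt_snd.prodMk ((contDiffAt_snd.div contDiffAt_fst hc).div_const d)
  obtain ⟨K₁, U₁, hU₁, hlip⟩ := hsmooth.exists_lipschitzOnWith
  let L : ℝ →L[ℝ] ℝ × ℝ := .inr ℝ ℝ ℝ ∘L (d⁻¹ • .id ℝ ℝ)
  have hforce : LipschitzOnWith (‖L‖₊ * (K * 1)) (fun z : ℝ × ℝ ↦ L (g z.1)) (Prod.fst ⁻¹' U) :=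
    L.lipschitz.comp_lipschitzOnWith
      (hg.comp LipschitzWith.prod_fst.lipschitzOnWith (mapsTo_preimage _ _))
  have hsplit : slemrodField d g = fun z ↦ (z.2, z.2 / z.1 / d) - L (g z.1) := by
    ext z <;> simp [L, slemrodField, sub_div, inv_mul_eq_div]
  rw [hsplit]
  exact ⟨_, _, inter_mem hU₁ (continuousAt_fst.preimage_mem_nhds hU),
    (hlip.mono inter_subset_left).sub (hforce.mono inter_subset_right)⟩

theorem slemrodField_snd_sub_le {d c b v w : ℝ} {g : ℝ → ℝ} (hd : 0 < d) (hc : 0 < c)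
    (hv : v ∈ Ioo c b) (hg : (v - b) / (4 * d * b ^ 2) ≤ g v)
    (hw : 0 ≤ w - (v - b) / (2 * d * b)) :
    (slemrodField d g (v, w)).2 - w / (2 * d * b) ≤ 1 / (d * c) * (w - (v - b) / (2 * d * b)) := by
  have hvpos : 0 < v := hc.trans hv.1
  have hb : 0 < b := hvpos.trans hv.2
  have hbv : 0 ≤ b - v := sub_nonneg.2 hv.2.le
  set e := w - (v - b) / (2 * d * b) with he
  have hwe : w = e - (b - v) / (2 * d * b) := by rw [he]; ring
  have hdamp : w / v ≤ e / c - (b - v) / (2 * d * b) / b := by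
    rw [hwe, sub_div]
    gcongr
    exacts [hv.1.le, hv.2.le]
  calc (w / v - g v) / d - w / (2 * d * b)
      ≤ (e / c - (b - v) / (2 * d * b) / b - (v - b) / (4 * d * b ^ 2)) / d - w / (2 * d * b) := by
        gcongr
    _ = 1 / (d * c) * e - e / (2 * d * b) := by rw [hwe]; field_simp; ring
    _ ≤ 1 / (d * c) * e := sub_le_self _ (by positivity)

/-- A global solution `(v, w)` of the flow of `slemrodField d g` in the half-plane `v > 0`. -/
structure IsSlemrodOrbit (d : ℝ) (g v w : ℝ → ℝ) : Prop where
  pos : ∀ x, 0 < v x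
  hasDerivAt_fst : ∀ x, HasDerivAt v (w x) x
  hasDerivAt_snd : ∀ x, HasDerivAt w ((w x / v x - g (v x)) / d) x

/-- The energy of `d v'' = v' / v - g v` along `(v, w)`: kinetic plus potential, the potential being
normalized to vanish at `c`. -/
noncomputable def slemrodEnergy (d : ℝ) (g : ℝ → ℝ) (c : ℝ) (v w : ℝ → ℝ) (x : ℝ) : ℝ :=
  d / 2 * w x ^ 2 + ∫ t in c..v x, g t

theorem tendsto_slemrodEnergy {d c : ℝ} {g v w : ℝ → ℝ} (hc : 0 < c)
    (hg : ContinuousOn g (Ioi 0)) (hv : Tendsto v atTop (𝓝 c)) (hw : Tendsto w atTop (𝓝 0)) :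
    Tendsto (slemrodEnergy d g c v w) atTop (𝓝 0) := by
  have hpot := (hasDerivAt_integral_right_of_ordConnected isOpen_Ioi ordConnected_Ioi hg hc
    hc).continuousAt.tendsto.comp hv
  have henergy := ((hw.pow 2).const_mul (d / 2)).add hpot
  simp only [intervalIntegral.integral_same, ne_eq, OfNat.ofNat_ne_zero, not_false_eq_true,
    zero_pow, mul_zero, add_zero] at henergy
  exact henergy

namespace IsSlemrodOrbit

variable {d c : ℝ} {g v w : ℝ → ℝ}

theorem continuous_fst (h : IsSlemrodOrbit d g v w) : Continuous v :=
  continuous_iff_continuousAt.2 fun x ↦ (h.hasDerivAt_fst x).continuousAt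

theorem hasDerivAt_slemrodField (h : IsSlemrodOrbit d g v w) (x : ℝ) :
    HasDerivAt (fun x ↦ (v x, w x)) (slemrodField d g (v x, w x)) x :=
  (h.hasDerivAt_fst x).prodMk (h.hasDerivAt_snd x)

theorem fst_eq_of_rest_point (h : IsSlemrodOrbit d g v w) (hc : c ≠ 0) {K : NNReal} {U : Set ℝ}
    (hU : U ∈ 𝓝 c) (hg : LipschitzOnWith K g U) (hgc : g c = 0) {x : ℝ} (hv : v x = c)
    (hw : w x = 0) (y : ℝ) : v y = c := by
  obtain ⟨K', U', hU', hlip⟩ := exists_lipschitzOnWith_slemrodField (d := d) (y := 0) hc hU hg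
  have hrest : slemrodField d g (c, 0) = 0 := by simp [slemrodField, hgc]
  exact congrArg Prod.fst
    (eq_of_hasDerivAt_of_eq_zero hU' hlip hrest h.hasDerivAt_slemrodField (Prod.ext hv hw) y)

theorem hasDerivAt_slemrodEnergy (h : IsSlemrodOrbit d g v w) (hd : d ≠ 0) (hc : 0 < c)
    (hg : ContinuousOn g (Ioi 0)) (x : ℝ) :
    HasDerivAt (slemrodEnergy d g c v w) (w x ^ 2 / v x) x := by
  have hpot := (hasDerivAt_integral_right_of_ordConnected isOpen_Ioi ordConnected_Ioi hg hc
    (h.pos x)).comp x (h.hasDerivAt_fst x)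
  refine ((((h.hasDerivAt_snd x).pow 2).const_mul (d / 2)).add hpot).congr_deriv ?_
  field_simp
  ring

theorem monotone_slemrodEnergy (h : IsSlemrodOrbit d g v w) (hd : d ≠ 0) (hc : 0 < c)
    (hg : ContinuousOn g (Ioi 0)) : Monotone (slemrodEnergy d g c v w) :=
  monotone_of_hasDerivAt_nonneg (h.hasDerivAt_slemrodEnergy hd hc hg) fun x ↦
    div_nonneg (sq_nonneg _) (h.pos x).le

theorem snd_eq_zero_of_fst_eq (h : IsSlemrodOrbit d g v w) (hd : 0 < d) (hc : 0 < c)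
    (hg : ContinuousOn g (Ioi 0)) (hv : Tendsto v atTop (𝓝 c)) (hw : Tendsto w atTop (𝓝 0))
    {x : ℝ} (hx : v x = c) : w x = 0 := by
  have henergy : slemrodEnergy d g c v w x ≤ 0 :=
    (h.monotone_slemrodEnergy hd.ne' hc hg).ge_of_tendsto (tendsto_slemrodEnergy hc hg hv hw) x
  simp only [slemrodEnergy, hx, intervalIntegral.integral_same, add_zero] at henergy
  exact pow_eq_zero_iff two_ne_zero |>.1
    (le_antisymm (nonpos_of_mul_nonpos_right henergy (half_pos hd)) (sq_nonneg _))

theorem snd_le_of_mem_Ioo (h : IsSlemrodOrbit d g v w) (hd : 0 < d) (hc : 0 < c) {b z : ℝ}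
    (hg : ∀ s ∈ Ioo c b, (s - b) / (4 * d * b ^ 2) ≤ g s) (hv : ∀ x, z < x → v x ∈ Ioo c b)
    (hz : w z ≤ (v z - b) / (2 * d * b)) {y : ℝ} (hy : z ≤ y) :
    w y ≤ (v y - b) / (2 * d * b) := by
  have hderiv : ∀ x, HasDerivAt (fun x ↦ w x - (v x - b) / (2 * d * b))
      ((w x / v x - g (v x)) / d - w x / (2 * d * b)) x := fun x ↦
    (h.hasDerivAt_snd x).sub (((h.hasDerivAt_fst x).sub_const b).div_const _)
  refine sub_nonpos.1 (image_nonpos_of_deriv_right_le_mul_of_pos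
    (f := fun x ↦ w x - (v x - b) / (2 * d * b)) (K := 1 / (d * c)) hy
    (HasDerivAt.continuousOn fun x _ ↦ hderiv x) (fun x _ ↦ (hderiv x).hasDerivWithinAt)
    (sub_nonpos.2 hz) fun x hx hpos ↦ ?_)
  have hzx : z < x := hx.1.lt_of_ne fun hzx ↦ hpos.not_ge (hzx ▸ sub_nonpos.2 hz)
  exact slemrodField_snd_sub_le hd hc (hv x hzx) (hg _ (hv x hzx)) hpos.le

theorem snd_nonneg_of_nonneg (h : IsSlemrodOrbit d g v w) (hd : 0 < d) (hc : 0 < c)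
    (hv : ∀ x, c < v x) (hg : ∀ x, g (v x) ≤ 0) {x y : ℝ} (hxy : x ≤ y) (hx : 0 ≤ w x) :
    0 ≤ w y := by
  have hderiv := fun x ↦ (h.hasDerivAt_snd x).neg
  refine neg_nonpos.1 (image_nonpos_of_deriv_right_le_mul_of_pos (f := -w) (K := 1 / (d * c)) hxy
    (HasDerivAt.continuousOn fun x _ ↦ hderiv x) (fun x _ ↦ (hderiv x).hasDerivWithinAt)
    (neg_nonpos.2 hx) fun x _ hpos ↦ ?_)
  calc -((w x / v x - g (v x)) / d) = (-w x / v x + g (v x)) / d := by ring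
    _ ≤ (-w x / c + 0) / d := by
      have : 0 ≤ -w x := hpos.le
      gcongr
      exacts [(hv x).le, hg x]
    _ = 1 / (d * c) * (-w) x := by simp only [Pi.neg_apply]; field_simp; ring

end IsSlemrodOrbit

/-- An orbit of `slemrodField d g` from `b` at `-∞` to the rest point `(c, 0)` at `+∞`. -/
structure IsSlemrodConnection (d : ℝ) (g : ℝ → ℝ) (b c : ℝ) (v w : ℝ → ℝ) : Prop
    extends IsSlemrodOrbit d g v w where
  tendsto_fst_atBot : Tendsto v atBot (𝓝 b)
  tendsto_fst_atTop : Tendsto v atTop (𝓝 c)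
  tendsto_snd_atTop : Tendsto w atTop (𝓝 0)

namespace IsSlemrodConnection

variable {d b c : ℝ} {g v w : ℝ → ℝ}

theorem fst_ne (h : IsSlemrodConnection d g b c v w) (hd : 0 < d) (hc : 0 < c) (hcb : c ≠ b)
    (hg : ContinuousOn g (Ioi 0)) {K : NNReal} {U : Set ℝ} (hU : U ∈ 𝓝 c)
    (hlip : LipschitzOnWith K g U) (hgc : g c = 0) (x : ℝ) : v x ≠ c := fun hx ↦ by
  have hw : w x = 0 :=
    h.snd_eq_zero_of_fst_eq hd hc hg h.tendsto_fst_atTop h.tendsto_snd_atTop hx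
  have hconst : v = fun _ ↦ c := funext (h.fst_eq_of_rest_point hc.ne' hU hlip hgc hx hw)
  exact hcb (tendsto_nhds_unique tendsto_const_nhds (hconst ▸ h.tendsto_fst_atBot))

theorem lt_fst (h : IsSlemrodConnection d g b c v w) (hcb : c < b) (hne : ∀ x, v x ≠ c) (x : ℝ) :
    c < v x := by
  by_contra! hx
  obtain ⟨y, hy⟩ := (h.tendsto_fst_atBot.eventually (lt_mem_nhds hcb)).exists
  obtain ⟨z, hz⟩ := intermediate_value_univ x y h.continuous_fst ⟨hx, hy.le⟩
  exact hne z hz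

theorem fst_lt (h : IsSlemrodConnection d g b c v w) (hd : 0 < d) (hc : 0 < c) (hcb : c < b)
    (hg : ∀ s ∈ Ioo c b, (s - b) / (4 * d * b ^ 2) ≤ g s) (hlt : ∀ x, c < v x) (x : ℝ) :
    v x < b := by
  by_contra! hx
  obtain ⟨z, hz, hafter⟩ := exists_last_eq_of_eventually_lt h.continuous_fst
    (h.tendsto_fst_atTop.eventually (gt_mem_nhds hcb)) hx
  have hwz : w z ≤ 0 :=
    hasDerivWithinAt_Ioi_nonpos_of_forall_gt_le (h.hasDerivAt_fst z).hasDerivWithinAt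
      fun y hy ↦ hz ▸ (hafter y hy).le
  have htrap : ∀ y, z ≤ y → w y ≤ (v y - b) / (2 * d * b) := fun y hy ↦
    h.snd_le_of_mem_Ioo hd hc hg (fun x hx ↦ ⟨hlt x, hafter x hx⟩) (by simpa [hz] using hwz) hy
  have hlim : 0 ≤ (c - b) / (2 * d * b) :=
    le_of_tendsto_of_tendsto h.tendsto_snd_atTop
      ((h.tendsto_fst_atTop.sub_const b).div_const _) ((eventually_ge_atTop z).mono htrap)
  have hb : 0 < b := hc.trans hcb
  exact hlim.not_gt (div_neg_of_neg_of_pos (sub_neg.2 hcb) (by positivity))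

theorem snd_neg (h : IsSlemrodConnection d g b c v w) (hd : 0 < d) (hc : 0 < c)
    (hlt : ∀ x, c < v x) (hg : ∀ x, g (v x) ≤ 0) (x : ℝ) : w x < 0 := by
  by_contra! hx
  have hmono : MonotoneOn v (Ici x) :=
    monotoneOn_of_hasDerivWithinAt_nonneg (convex_Ici x) h.continuous_fst.continuousOn
      (fun y _ ↦ (h.hasDerivAt_fst y).hasDerivWithinAt)
      fun y hy ↦ h.snd_nonneg_of_nonneg hd hc hlt hg (interior_subset hy) hx
  exact (hlt x).not_ge (ge_of_tendsto h.tendsto_fst_atTop <|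
    (eventually_ge_atTop x).mono fun y hy ↦ hmono self_mem_Ici hy hy)

theorem strictAnti (h : IsSlemrodConnection d g b c v w) (hd : 0 < d) (hc : 0 < c) (hcb : c < b)
    {r γ : ℝ} (hrc : r < c) (hg : ContinuousOn g (Ioi 0)) (hconv : ConvexOn ℝ (Icc r b) g)
    (hgc : g c = 0) (hgb : g b = 0) (hderiv : HasDerivAt g γ b) (hγ : γ ≤ 1 / (4 * d * b ^ 2)) :
    StrictAnti v := by
  have hcmem : c ∈ Icc r b := ⟨hrc.le, hcb.le⟩
  have hbmem : b ∈ Icc r b := right_mem_Icc.2 (hrc.trans hcb).le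
  have hnonpos : ∀ s ∈ Ioo c b, g s ≤ 0 := fun s hs ↦ by
    simpa [hgc, hgb] using hconv.le_max_of_mem_Icc hcmem hbmem (Ioo_subset_Icc_self hs)
  have htangent : ∀ s ∈ Ioo c b, (s - b) / (4 * d * b ^ 2) ≤ g s := fun s hs ↦ by
    have hslope := hconv.slope_le_of_hasDerivAt ⟨(hrc.trans hs.1).le, hs.2.le⟩ hbmem hs.2 hderiv
    rw [slope_def_field, hgb, div_le_iff₀ (sub_pos.2 hs.2)] at hslope
    rw [div_eq_mul_one_div]
    nlinarith [mul_le_mul_of_nonneg_left hγ (sub_nonneg.2 hs.2.le)]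
  have hcint : c ∈ interior (Icc r b) := by rw [interior_Icc]; exact ⟨hrc, hcb⟩
  obtain ⟨K, U, hU, hlip⟩ := hconv.locallyLipschitzOn_interior hcint
  have hlt := h.lt_fst hcb
    (h.fst_ne hd hc hcb.ne hg (isOpen_interior.nhdsWithin_eq hcint ▸ hU) hlip hgc)
  have hub := h.fst_lt hd hc hcb htangent hlt
  exact strictAnti_of_hasDerivAt_neg h.hasDerivAt_fst
    (h.snd_neg hd hc hlt fun x ↦ hnonpos _ ⟨hlt x, hub x⟩)

end IsSlemrodConnection

/-- The force `s ↦ s - b + a (p s - p b)` of the profile equation with end state `v₋ = b`. -/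
def slemrodForce (p : ℝ → ℝ) (a b s : ℝ) : ℝ :=
  s - b + a * (p s - p b)

section Force

variable {p : ℝ → ℝ} {a b c : ℝ}

theorem slemrodForce_self : slemrodForce p a b b = 0 := by simp [slemrodForce]

theorem slemrodForce_eq_zero_of_rankineHugoniot (hp : p c ≠ p b)
    (ha : a = -(c - b) / (p c - p b)) : slemrodForce p a b c = 0 := by
  rw [slemrodForce, ha, div_mul_cancel₀ _ (sub_ne_zero.2 hp)]
  ring

theorem hasDerivAt_slemrodForce {q s : ℝ} (hp : HasDerivAt p q s) :
    HasDerivAt (slemrodForce p a b) (1 + a * q) s :=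
  ((hasDerivAt_id s).sub_const b).add ((hp.sub_const (p b)).const_mul a)

theorem continuousOn_slemrodForce {S : Set ℝ} (hp : ContinuousOn p S) :
    ContinuousOn (slemrodForce p a b) S :=
  (continuousOn_id.sub continuousOn_const).add
    (continuousOn_const.mul (hp.sub continuousOn_const))

theorem convexOn_slemrodForce {S : Set ℝ} (hp : ConvexOn ℝ S p) (ha : 0 ≤ a) :
    ConvexOn ℝ S (slemrodForce p a b) :=
  ((convexOn_id hp.1).sub (concaveOn_const b hp.1)).add
    ((hp.sub (concaveOn_const (p b) hp.1)).smul ha)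

theorem eventually_one_sub_div_slope_lt {q κ : ℝ} (hp : HasDerivAt p q b) (hq : q ≠ 0)
    (hκ : 0 < κ) : ∀ᶠ c in 𝓝[<] b, 1 - q / slope p c b < κ := by
  have hslope : Tendsto (fun c ↦ slope p c b) (𝓝[<] b) (𝓝 q) := by
    simp_rw [slope_comm p _ b]
    exact (hasDerivWithinAt_iff_tendsto_slope' self_notMem_Iio).1 hp.hasDerivWithinAt
  have hlim : Tendsto (fun c ↦ 1 - q / slope p c b) (𝓝[<] b) (𝓝 (1 - q / q)) :=
    (tendsto_const_nhds.div hslope hq).const_sub 1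
  rw [div_self hq, sub_self] at hlim
  exact hlim.eventually (gt_mem_nhds hκ)

end Force

theorem small_amplitude_monotone_general {vm d q r : ℝ} {p : ℝ → ℝ} (hvm : 0 < vm) (hd : 0 < d)
    (hr : r < vm) (hp : ContinuousOn p (Ioi 0)) (hconv : ConvexOn ℝ (Icc r vm) p)
    (hpq : HasDerivAt p q vm) (hq : q < 0) :
    ∃ ε₀ > 0, ∀ vp a : ℝ, 0 < vp → vp < vm → vm - vp < ε₀ →
      a = -(vp - vm) / (p vp - p vm) →
      ∀ vhat vhat' vhat'' : ℝ → ℝ,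
        (∀ x, 0 < vhat x) →
        (∀ x, HasDerivAt vhat (vhat' x) x) →
        (∀ x, HasDerivAt vhat' (vhat'' x) x) →
        (∀ x, vhat x - vm + a * (p (vhat x) - p vm) = vhat' x / vhat x - d * vhat'' x) →
        Tendsto vhat atBot (𝓝 vm) →
        Tendsto vhat atTop (𝓝 vp) →
        Tendsto vhat' atTop (𝓝 0) →
        StrictAnti vhat := by
  obtain ⟨l, hl, hsmall⟩ := mem_nhdsLT_iff_exists_Ioo_subset.1 <|
    (eventually_one_sub_div_slope_lt hpq hq.ne (by positivity : 0 < 1 / (4 * d * vm ^ 2))).and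
      (Ioo_mem_nhdsLT hr)
  refine ⟨vm - l, sub_pos.2 hl, fun vp a hvp hlt hamp ha v v' v'' hpos hv hv' hode hbot htop
    htop' ↦ ?_⟩
  obtain ⟨hnode, hrvp, -⟩ := hsmall ⟨by linarith, hlt⟩
  have hslope : slope p vp vm < 0 := hq.trans_le' <|
    hconv.slope_le_of_hasDerivAt ⟨hrvp.le, hlt.le⟩ (right_mem_Icc.2 hr.le) hlt hpq
  have ha' : a = -(slope p vp vm)⁻¹ := by
    rw [ha, slope_comm, slope_def_field, inv_div, neg_div]
  have hpne : p vp ≠ p vm := fun h ↦ hslope.ne (by simp [slope_def_field, h])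
  have hconn : IsSlemrodConnection d (slemrodForce p a vm) vm vp v v' :=
    { pos := hpos
      hasDerivAt_fst := hv
      hasDerivAt_snd := fun x ↦ (hv' x).congr_deriv <| by
        rw [eq_div_iff hd.ne', slemrodForce]
        linarith [hode x]
      tendsto_fst_atBot := hbot
      tendsto_fst_atTop := htop
      tendsto_snd_atTop := htop' }
  refine hconn.strictAnti hd hvp hlt hrvp (continuousOn_slemrodForce hp)
    (convexOn_slemrodForce hconv ?_) (slemrodForce_eq_zero_of_rankineHugoniot hpne ha)
    slemrodForce_self (hasDerivAt_slemrodForce hpq) ?_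
  · exact ha' ▸ (neg_pos.2 (inv_lt_zero.2 hslope)).le
  · rw [ha', neg_mul, inv_mul_eq_div, ← sub_eq_add_neg]
    exact hnode.le

/-- For fixed `vm > 0`, `d > 0`, and a `C³` ideal gas law, all
sufficiently small-amplitude shock profiles of Slemrod's model are strictly
decreasing (monotone). -/
theorem small_amplitude_monotone
    (vm d : ℝ) (hvm : 0 < vm) (hd : 0 < d)
    (p p' p'' p''' : ℝ → ℝ)
    (hp'd : ∀ v ∈ Ioi (0:ℝ), HasDerivAt p (p' v) v)
    (hp''d : ∀ v ∈ Ioi (0:ℝ), HasDerivAt p' (p'' v) v)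
    (hp'''d : ∀ v ∈ Ioi (0:ℝ), HasDerivAt p'' (p''' v) v)
    (hp'''cont : ContinuousOn p''' (Ioi 0))
    (hp'neg : ∀ v ∈ Ioi (0:ℝ), p' v < 0)
    (hp''pos : ∀ v ∈ Ioi (0:ℝ), 0 < p'' v) :
    ∃ ε₀ > 0, ∀ vp a : ℝ, 0 < vp → vp < vm → vm - vp < ε₀ →
      a = -(vp - vm) / (p vp - p vm) →
      ∀ vhat vhat' vhat'' : ℝ → ℝ,
        (∀ x, 0 < vhat x) →
        (∀ x, HasDerivAt vhat (vhat' x) x) →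
        (∀ x, HasDerivAt vhat' (vhat'' x) x) →
        (∀ x, vhat x - vm + a * (p (vhat x) - p vm) = vhat' x / vhat x - d * vhat'' x) →
        Tendsto vhat atBot (𝓝 vm) →
        Tendsto vhat atTop (𝓝 vp) →
        Tendsto vhat' atBot (𝓝 0) →
        Tendsto vhat' atTop (𝓝 0) →
        StrictAnti vhat := by
  have hconv : ConvexOn ℝ (Ioi 0) p :=
    convexOn_of_hasDerivWithinAt2_nonneg (convex_Ioi 0) (HasDerivAt.continuousOn hp'd)
      (fun v hv ↦ (hp'd v (interior_subset hv)).hasDerivWithinAt)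
      (fun v hv ↦ (hp''d v (interior_subset hv)).hasDerivWithinAt)
      fun v hv ↦ (hp''pos v (interior_subset hv)).le
  obtain ⟨ε₀, hε₀, hmono⟩ := small_amplitude_monotone_general hvm hd (half_lt_self hvm)
    (HasDerivAt.continuousOn hp'd)
    (hconv.subset (fun v hv ↦ (half_pos hvm).trans_le hv.1) (convex_Icc _ _))
    (hp'd vm hvm) (hp'neg vm hvm)
  exact ⟨ε₀, hε₀, fun vp a hvp hlt hamp ha v v' v'' hpos hv hv' hode hbot htop _ htop' ↦
    hmono vp a hvp hlt hamp ha v v' v'' hpos hv hv' hode hbot htop htop'⟩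
end
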